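/- arXiv:nlin/0309078 — 2 statements merged into one kernel-verified Lean document; each statement's English description precedes it below -/
import Mathlib

section
/- Define the rational functions of s ∈ ℂ: t(s) = −(2s−1)²/(8s) and y(s) = (s−1)(3s−1)(2s−1)/(12s(s²+1)). Then for every s ∈ ℂ such that s ≠ 0, s²+1 ≠ 0, t'(s) ≠ 0, t(s) ∉ {0,1}, and y(s) ∉ {0, 1, t(s)}, the pair (t, y) is a parametric solution of the sixth Painlevé equation PVI(α,β,γ,δ) at s with θ-tuple (θ₀, θ₁, θ_t, θ_∞) = (1/4, 1/4, 1/2, −1/2), i.e. α = 9/8, β = −1/32, γ = 1/32, δ = 3/8. -/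
noncomputable def tFun11 : ℂ → ℂ := fun s => -(2*s-1)^2/(8*s)

noncomputable def yFun11 : ℂ → ℂ := fun s => (s-1)*(3*s-1)*(2*s-1)/(12*s*(s^2+1))

/-!
The involution `s ↦ -s` of the parameter acts by `(t, y) ↦ (1 - t, 1 - y)`, and the sixth Painlevé
equation has this symmetry whenever `β = -γ`. Its right-hand side can then be written in terms of
`2 t - 1`, `t (t - 1)`, `2 y - 1`, `y (y - 1)` and `y - t`, each of which is even or odd in `s`,
hence a rational function of `s ^ 2` up to a factor `s`. The equation becomes a polynomial identity
in `s ^ 2` of low degree.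
-/

section PainleveVI

variable {K : Type*} [Field K]

/-- The right-hand side of the sixth Painlevé equation `y'' = F(t, y, y')` with parameters
`(α, β, γ, δ)`, where `p` stands for the velocity `y' = dy/dt`. -/
def painleveVI (α β γ δ t y p : K) : K :=
  (1 / 2) * (1 / y + 1 / (y - 1) + 1 / (y - t)) * p ^ 2
    - (1 / t + 1 / (t - 1) + 1 / (y - t)) * p
    + (y * (y - 1) * (y - t) / (t ^ 2 * (t - 1) ^ 2)) *
      (α + β * t / y ^ 2 + γ * (t - 1) / (y - 1) ^ 2 + δ * t * (t - 1) / (y - t) ^ 2)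

theorem one_div_add_one_div_sub_one {x : K} (hx0 : x ≠ 0) (hx1 : x ≠ 1) :
    1 / x + 1 / (x - 1) = (2 * x - 1) / (x * (x - 1)) := by
  rw [div_add_div _ _ hx0 (sub_ne_zero.2 hx1)]
  ring

theorem sub_one_div_sq_sub_div_sq (t : K) {y : K} (hy0 : y ≠ 0) (hy1 : y ≠ 1) :
    (t - 1) / (y - 1) ^ 2 - t / y ^ 2 = (t * (t - 1) - (y - t) ^ 2) / (y * (y - 1)) ^ 2 := by
  have hy1' : y - 1 ≠ 0 := sub_ne_zero.2 hy1
  field_simp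
  ring

theorem painleveVI_neg_gamma_eq (α γ δ p : K) {t y : K} (ht0 : t ≠ 0) (ht1 : t ≠ 1)
    (hy0 : y ≠ 0) (hy1 : y ≠ 1) :
    painleveVI α (-γ) γ δ t y p =
      (1 / 2) * ((2 * y - 1) / (y * (y - 1)) + 1 / (y - t)) * p ^ 2
        - ((2 * t - 1) / (t * (t - 1)) + 1 / (y - t)) * p
        + (y * (y - 1) * (y - t) / (t * (t - 1)) ^ 2) *
          (α + γ * ((t * (t - 1) - (y - t) ^ 2) / (y * (y - 1)) ^ 2)
            + δ * (t * (t - 1) / (y - t) ^ 2)) := by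
  rw [painleveVI, one_div_add_one_div_sub_one hy0 hy1, one_div_add_one_div_sub_one ht0 ht1,
    ← sub_one_div_sq_sub_div_sq t hy0 hy1]
  ring

end PainleveVI

section Curve

variable {s : ℂ}

theorem two_mul_tFun11_sub_one (hs : s ≠ 0) : 2 * tFun11 s - 1 = -(4 * s ^ 2 + 1) / (4 * s) := by
  rw [tFun11]
  field_simp
  ring

theorem tFun11_mul_sub_one (hs : s ≠ 0) :
    tFun11 s * (tFun11 s - 1) = (4 * s ^ 2 - 1) ^ 2 / (64 * s ^ 2) := by
  rw [tFun11]
  field_simp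
  ring

theorem two_mul_yFun11_sub_one (hs : s ≠ 0) (hs' : s ^ 2 + 1 ≠ 0) :
    2 * yFun11 s - 1 = -(11 * s ^ 2 + 1) / (6 * s * (s ^ 2 + 1)) := by
  rw [yFun11]
  field_simp
  ring

theorem yFun11_mul_sub_one (hs : s ≠ 0) (hs' : s ^ 2 + 1 ≠ 0) :
    yFun11 s * (yFun11 s - 1) =
      -((s ^ 2 - 1) * (9 * s ^ 2 - 1) * (4 * s ^ 2 - 1)) / (144 * s ^ 2 * (s ^ 2 + 1) ^ 2) := by
  rw [yFun11]
  field_simp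
  ring

theorem yFun11_sub_tFun11 (hs : s ≠ 0) (hs' : s ^ 2 + 1 ≠ 0) :
    yFun11 s - tFun11 s = (4 * s ^ 2 - 1) * (3 * s ^ 2 - 1) / (24 * s * (s ^ 2 + 1)) := by
  rw [yFun11, tFun11]
  field_simp
  ring

theorem tFun11_mul_sub_one_sub_sq (hs : s ≠ 0) (hs' : s ^ 2 + 1 ≠ 0) :
    tFun11 s * (tFun11 s - 1) - (yFun11 s - tFun11 s) ^ 2 =
      (4 * s ^ 2 - 1) ^ 2 * (3 * s ^ 2 + 1) / (72 * s ^ 2 * (s ^ 2 + 1) ^ 2) := by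
  rw [tFun11_mul_sub_one hs, yFun11_sub_tFun11 hs hs']
  field_simp
  ring

theorem deriv_tFun11 (hs : s ≠ 0) : deriv tFun11 s = -(4 * s ^ 2 - 1) / (8 * s ^ 2) := by
  have hnum : HasDerivAt (fun u : ℂ => -(2 * u - 1) ^ 2) (-(4 * (2 * s - 1))) s := by
    refine ((((hasDerivAt_id' s).const_mul 2).sub_const 1).fun_pow 2).fun_neg.congr_deriv ?_
    ring
  have hden : HasDerivAt (fun u : ℂ => 8 * u) 8 s := by
    simpa using (hasDerivAt_id' s).const_mul (8 : ℂ)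
  have ht : HasDerivAt tFun11 _ s := hnum.fun_div hden (by simpa using hs)
  rw [ht.deriv]
  field_simp
  ring

theorem deriv_yFun11 (hs : s ≠ 0) (hs' : s ^ 2 + 1 ≠ 0) :
    deriv yFun11 s = (11 * s ^ 4 - 8 * s ^ 2 + 1) / (12 * s ^ 2 * (s ^ 2 + 1) ^ 2) := by
  have hnum : HasDerivAt (fun u : ℂ => (u - 1) * (3 * u - 1) * (2 * u - 1))
      (18 * s ^ 2 - 22 * s + 6) s := by
    refine ((((hasDerivAt_id' s).sub_const 1).fun_mul
      (((hasDerivAt_id' s).const_mul 3).sub_const 1)).fun_mul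
      (((hasDerivAt_id' s).const_mul 2).sub_const 1)).congr_deriv ?_
    ring
  have hden : HasDerivAt (fun u : ℂ => 12 * u * (u ^ 2 + 1)) (36 * s ^ 2 + 12) s := by
    refine (((hasDerivAt_id' s).const_mul 12).fun_mul
      (((hasDerivAt_id' s).fun_pow 2).add_const 1)).congr_deriv ?_
    ring
  have hy : HasDerivAt yFun11 _ s := hnum.fun_div hden (by simpa using ⟨hs, hs'⟩)
  rw [hy.deriv]
  field_simp
  ring

theorem deriv_yFun11_div_deriv_tFun11 (hs : s ≠ 0) (hs' : s ^ 2 + 1 ≠ 0) :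
    deriv yFun11 s / deriv tFun11 s =
      -2 * (11 * s ^ 4 - 8 * s ^ 2 + 1) / (3 * (s ^ 2 + 1) ^ 2 * (4 * s ^ 2 - 1)) := by
  rw [deriv_tFun11 hs, deriv_yFun11 hs hs']
  field_simp
  ring

theorem deriv_deriv_yFun11_div_deriv_tFun11 (hs : s ≠ 0) (hs' : s ^ 2 + 1 ≠ 0)
    (h4 : 4 * s ^ 2 - 1 ≠ 0) :
    deriv (fun u => deriv yFun11 u / deriv tFun11 u) s =
      8 * s * (22 * s ^ 6 - 54 * s ^ 4 + 21 * s ^ 2 - 3) /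
        (3 * (s ^ 2 + 1) ^ 3 * (4 * s ^ 2 - 1) ^ 2) := by
  have hp : (fun u => deriv yFun11 u / deriv tFun11 u) =ᶠ[nhds s]
      fun u => -2 * (11 * u ^ 4 - 8 * u ^ 2 + 1) / (3 * (u ^ 2 + 1) ^ 2 * (4 * u ^ 2 - 1)) := by
    have hne : ∀ᶠ u in nhds s, u ^ 2 + 1 ≠ 0 :=
      ContinuousAt.eventually_ne (g := fun u : ℂ => u ^ 2 + 1) (by fun_prop) hs'
    filter_upwards [eventually_ne_nhds hs, hne] with u hu hu'
    exact deriv_yFun11_div_deriv_tFun11 hu hu'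
  have hnum : HasDerivAt (fun u : ℂ => -2 * (11 * u ^ 4 - 8 * u ^ 2 + 1))
      (-2 * (44 * s ^ 3 - 16 * s)) s := by
    refine (((((hasDerivAt_id' s).fun_pow 4).const_mul 11).fun_sub
      (((hasDerivAt_id' s).fun_pow 2).const_mul 8)).add_const 1).const_mul (-2) |>.congr_deriv ?_
    ring
  have hden : HasDerivAt (fun u : ℂ => 3 * (u ^ 2 + 1) ^ 2 * (4 * u ^ 2 - 1))
      (12 * s * (s ^ 2 + 1) * (6 * s ^ 2 + 1)) s := by
    refine ((((((hasDerivAt_id' s).fun_pow 2).add_const 1).fun_pow 2).const_mul 3).fun_mul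
      ((((hasDerivAt_id' s).fun_pow 2).const_mul 4).sub_const 1)).congr_deriv ?_
    ring
  rw [hp.deriv_eq, (hnum.fun_div hden (by simp [hs', h4])).deriv]
  field_simp
  ring

theorem factors_ne_zero_of_yFun11_ne_zero_of_ne_one (hs : s ≠ 0) (hs' : s ^ 2 + 1 ≠ 0)
    (hy0 : yFun11 s ≠ 0) (hy1 : yFun11 s ≠ 1) :
    s ^ 2 - 1 ≠ 0 ∧ 9 * s ^ 2 - 1 ≠ 0 ∧ 4 * s ^ 2 - 1 ≠ 0 := by
  have hyy : yFun11 s * (yFun11 s - 1) ≠ 0 := mul_ne_zero hy0 (sub_ne_zero.2 hy1)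
  rw [yFun11_mul_sub_one hs hs'] at hyy
  have hfac := neg_ne_zero.1 (div_ne_zero_iff.1 hyy).1
  simpa only [mul_ne_zero_iff, and_assoc] using hfac

theorem three_mul_sq_sub_one_ne_zero_of_yFun11_ne (hs : s ≠ 0) (hs' : s ^ 2 + 1 ≠ 0)
    (hyt : yFun11 s ≠ tFun11 s) : 3 * s ^ 2 - 1 ≠ 0 := by
  intro h
  apply sub_ne_zero.2 hyt
  rw [yFun11_sub_tFun11 hs hs', h, mul_zero, zero_div]

theorem painleveVI_sq_coeff_tFun11_yFun11 (hs : s ≠ 0) (hs' : s ^ 2 + 1 ≠ 0)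
    (h1 : s ^ 2 - 1 ≠ 0) (h9 : 9 * s ^ 2 - 1 ≠ 0) (h3 : 3 * s ^ 2 - 1 ≠ 0) :
    (2 * yFun11 s - 1) / (yFun11 s * (yFun11 s - 1)) + 1 / (yFun11 s - tFun11 s) =
      144 * s ^ 3 * (s ^ 2 + 1) * (7 * s ^ 2 - 3) /
        ((4 * s ^ 2 - 1) * (s ^ 2 - 1) * (9 * s ^ 2 - 1) * (3 * s ^ 2 - 1)) := by
  rw [two_mul_yFun11_sub_one hs hs', yFun11_mul_sub_one hs hs', yFun11_sub_tFun11 hs hs']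
  field_simp (disch := grind)
  ring

theorem painleveVI_linear_coeff_tFun11_yFun11 (hs : s ≠ 0) (hs' : s ^ 2 + 1 ≠ 0)
    (h3 : 3 * s ^ 2 - 1 ≠ 0) :
    (2 * tFun11 s - 1) / (tFun11 s * (tFun11 s - 1)) + 1 / (yFun11 s - tFun11 s) =
      -(8 * s * (12 * s ^ 4 - 11 * s ^ 2 + 1)) / ((4 * s ^ 2 - 1) ^ 2 * (3 * s ^ 2 - 1)) := by
  rw [two_mul_tFun11_sub_one hs, tFun11_mul_sub_one hs, yFun11_sub_tFun11 hs hs']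
  field_simp (disch := grind)
  ring

theorem painleveVI_potential_factor_tFun11_yFun11 (hs : s ≠ 0) (hs' : s ^ 2 + 1 ≠ 0) :
    yFun11 s * (yFun11 s - 1) * (yFun11 s - tFun11 s) / (tFun11 s * (tFun11 s - 1)) ^ 2 =
      -(32 * s * (s ^ 2 - 1) * (9 * s ^ 2 - 1) * (3 * s ^ 2 - 1)) /
        (27 * (s ^ 2 + 1) ^ 3 * (4 * s ^ 2 - 1) ^ 2) := by
  rw [yFun11_mul_sub_one hs hs', yFun11_sub_tFun11 hs hs', tFun11_mul_sub_one hs]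
  field_simp
  ring

theorem painleveVI_gamma_coeff_tFun11_yFun11 (hs : s ≠ 0) (hs' : s ^ 2 + 1 ≠ 0)
    (h4 : 4 * s ^ 2 - 1 ≠ 0) :
    (tFun11 s * (tFun11 s - 1) - (yFun11 s - tFun11 s) ^ 2) / (yFun11 s * (yFun11 s - 1)) ^ 2 =
      288 * s ^ 2 * (s ^ 2 + 1) ^ 2 * (3 * s ^ 2 + 1) /
        ((s ^ 2 - 1) * (9 * s ^ 2 - 1)) ^ 2 := by
  rw [tFun11_mul_sub_one_sub_sq hs hs', yFun11_mul_sub_one hs hs']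
  field_simp
  ring

theorem painleveVI_delta_coeff_tFun11_yFun11 (hs : s ≠ 0) (hs' : s ^ 2 + 1 ≠ 0)
    (h4 : 4 * s ^ 2 - 1 ≠ 0) :
    tFun11 s * (tFun11 s - 1) / (yFun11 s - tFun11 s) ^ 2 =
      9 * (s ^ 2 + 1) ^ 2 / (3 * s ^ 2 - 1) ^ 2 := by
  rw [yFun11_sub_tFun11 hs hs', tFun11_mul_sub_one hs]
  field_simp
  ring

theorem painleveVI_tFun11_yFun11 (hs : s ≠ 0) (hs' : s ^ 2 + 1 ≠ 0)
    (ht0 : tFun11 s ≠ 0) (ht1 : tFun11 s ≠ 1)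
    (hy0 : yFun11 s ≠ 0) (hy1 : yFun11 s ≠ 1) (hyt : yFun11 s ≠ tFun11 s) :
    painleveVI (9 / 8) (-1 / 32) (1 / 32) (3 / 8) (tFun11 s) (yFun11 s)
        (deriv yFun11 s / deriv tFun11 s) =
      -(64 * s ^ 3) * (22 * s ^ 6 - 54 * s ^ 4 + 21 * s ^ 2 - 3) /
        (3 * (s ^ 2 + 1) ^ 3 * (4 * s ^ 2 - 1) ^ 3) := by
  obtain ⟨h1, h9, h4⟩ := factors_ne_zero_of_yFun11_ne_zero_of_ne_one hs hs' hy0 hy1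
  have h3 := three_mul_sq_sub_one_ne_zero_of_yFun11_ne hs hs' hyt
  rw [neg_div, painleveVI_neg_gamma_eq _ _ _ _ ht0 ht1 hy0 hy1,
    painleveVI_sq_coeff_tFun11_yFun11 hs hs' h1 h9 h3,
    painleveVI_linear_coeff_tFun11_yFun11 hs hs' h3,
    painleveVI_potential_factor_tFun11_yFun11 hs hs',
    painleveVI_gamma_coeff_tFun11_yFun11 hs hs' h4,
    painleveVI_delta_coeff_tFun11_yFun11 hs hs' h4,
    deriv_yFun11_div_deriv_tFun11 hs hs']
  field_simp (disch := grind)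
  ring

end Curve

/-- Parametric algebraic solution of the sixth Painlevé equation. -/
theorem stmt_11 (s : ℂ)
    (h1 : s ≠ 0)
    (h2 : s^2+1 ≠ 0)
    (hdt : deriv tFun11 s ≠ 0)
    (ht0 : tFun11 s ≠ 0) (ht1 : tFun11 s ≠ 1)
    (hy0 : yFun11 s ≠ 0) (hy1 : yFun11 s ≠ 1) (hyt : yFun11 s ≠ tFun11 s) :
    deriv (fun u => deriv yFun11 u / deriv tFun11 u) s / deriv tFun11 s =
      (1/2) * (1/(yFun11 s) + 1/(yFun11 s - 1) + 1/(yFun11 s - tFun11 s)) *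
          (deriv yFun11 s / deriv tFun11 s)^2
        - (1/(tFun11 s) + 1/(tFun11 s - 1) + 1/(yFun11 s - tFun11 s)) *
          (deriv yFun11 s / deriv tFun11 s)
        + (yFun11 s * (yFun11 s - 1) * (yFun11 s - tFun11 s) /
            ((tFun11 s)^2 * (tFun11 s - 1)^2)) *
          ((9/8 : ℂ) + (-1/32 : ℂ) * tFun11 s / (yFun11 s)^2
            + (1/32 : ℂ) * (tFun11 s - 1) / (yFun11 s - 1)^2
            + (3/8 : ℂ) * tFun11 s * (tFun11 s - 1) / (yFun11 s - tFun11 s)^2) := by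
  have h4 : 4 * s ^ 2 - 1 ≠ 0 := fun h => hdt (by simp [deriv_tFun11 h1, h])
  change _ = painleveVI (9 / 8) (-1 / 32) (1 / 32) (3 / 8) (tFun11 s) (yFun11 s)
    (deriv yFun11 s / deriv tFun11 s)
  rw [painleveVI_tFun11_yFun11 h1 h2 ht0 ht1 hy0 hy1 hyt,
    deriv_deriv_yFun11_div_deriv_tFun11 h1 h2 h4, deriv_tFun11 h1]
  field_simp
  ring
end

section
/- Define the rational functions of s ∈ ℂ: t(s) = 2⁴·s³/((s+3)³(s−1)) and y(s) = 4(s²+4s−1)s²/(5(s+3)(s²+3)(s−1)). Then for every s ∈ ℂ such that s ≠ −3, s ≠ 1, s²+3 ≠ 0, t'(s) ≠ 0, t(s) ∉ {0,1}, and y(s) ∉ {0, 1, t(s)}, the pair (t, y) is a parametric solution of the sixth Painlevé equation PVI(α,β,γ,δ) at s with θ-tuple (θ₀, θ₁, θ_t, θ_∞) = (1/4, 1/4, 1/4, −1/4), i.e. α = 25/32, β = −1/32, γ = 1/32, δ = 15/32. -/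
noncomputable def tFun14 : ℂ → ℂ := fun s => 2^4*s^3/((s+3)^3*(s-1))

noncomputable def yFun14 : ℂ → ℂ := fun s => 4*(s^2+4*s-1)*s^2/(5*(s+3)*(s^2+3)*(s-1))

/-!
The zeros and poles of `t`, `t - 1`, `y`, `y - 1`, `y - t` and `dt/ds` all lie among the roots of
`s`, `s ± 1`, `s ± 3`, `s² + 3`, `s² - 5` and `s² ± 4s - 1`, and `p = dy/dt` has a denominator of
the same kind. The hypotheses say exactly that the factors occurring in denominators do not vanish
at `s`, so each of the terms of the Painlevé equation is an explicit fraction, and clearing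
denominators leaves a single polynomial identity.
-/

section PainleveSix

variable {K : Type*} [Field K]

/-- The coefficient of `(y')² / 2` in the sixth Painlevé equation. -/
def painleveSixQuadratic (t y : K) : K :=
  1 / y + 1 / (y - 1) + 1 / (y - t)

/-- The coefficient of `-y'` in the sixth Painlevé equation. -/
def painleveSixLinear (t y : K) : K :=
  1 / t + 1 / (t - 1) + 1 / (y - t)

/-- The term of the sixth Painlevé equation that does not involve `y'`; it is the only one that
depends on the parameters. -/
def painleveSixForce (α β γ δ t y : K) : K :=
  y * (y - 1) * (y - t) / (t ^ 2 * (t - 1) ^ 2) *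
    (α + β * t / y ^ 2 + γ * (t - 1) / (y - 1) ^ 2 + δ * t * (t - 1) / (y - t) ^ 2)

/-- The value that the sixth Painlevé equation prescribes for `y''` when `y' = p`. -/
def painleveSixRHS (α β γ δ t y p : K) : K :=
  1 / 2 * painleveSixQuadratic t y * p ^ 2 - painleveSixLinear t y * p +
    painleveSixForce α β γ δ t y

end PainleveSix

/-- The rational function `dy/dt = (dy/ds) / (dt/ds)`, in lowest terms. -/
noncomputable def slopeFun14 (s : ℂ) : ℂ :=
  (s ^ 4 + 2 * s ^ 3 - 4 * s ^ 2 - 18 * s + 3) * (s + 3) ^ 2 /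
    (10 * s * (s - 3) * (s ^ 2 + 3) ^ 2)

section Parametrization

variable {s : ℂ}

lemma tFun14_sub_one (ha : s + 3 ≠ 0) (hb : s - 1 ≠ 0) :
    tFun14 s - 1 = -((s - 3) ^ 3 * (s + 1)) / ((s + 3) ^ 3 * (s - 1)) := by
  simp only [tFun14]
  field_simp
  ring

lemma yFun14_sub_one (ha : s + 3 ≠ 0) (hb : s - 1 ≠ 0) (hc : s ^ 2 + 3 ≠ 0) :
    yFun14 s - 1 =
      -((s - 3) ^ 2 * (s ^ 2 - 5)) / (5 * (s + 3) * (s ^ 2 + 3) * (s - 1)) := by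
  simp only [yFun14]
  field_simp
  ring

lemma yFun14_sub_tFun14 (ha : s + 3 ≠ 0) (hb : s - 1 ≠ 0) (hc : s ^ 2 + 3 ≠ 0) :
    yFun14 s - tFun14 s =
      4 * s ^ 2 * (s - 3) ^ 2 * (s ^ 2 - 4 * s - 1) /
        (5 * (s + 3) ^ 3 * (s ^ 2 + 3) * (s - 1)) := by
  simp only [yFun14, tFun14]
  field_simp
  ring

lemma deriv_tFun14 (ha : s + 3 ≠ 0) (hb : s - 1 ≠ 0) :
    deriv tFun14 s = -16 * s ^ 2 * (s - 3) ^ 2 / ((s + 3) ^ 4 * (s - 1) ^ 2) := by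
  have hid := hasDerivAt_id' s
  have hnum := (hid.fun_pow 3).const_mul (2 ^ 4)
  have hden := ((hid.add_const 3).fun_pow 3).fun_mul (hid.sub_const 1)
  refine ((hnum.fun_div hden (by simp [*])).congr_deriv ?_).deriv
  field_simp
  ring

lemma deriv_yFun14 (ha : s + 3 ≠ 0) (hb : s - 1 ≠ 0) (hc : s ^ 2 + 3 ≠ 0) :
    deriv yFun14 s =
      -8 * s * (s - 3) * (s ^ 4 + 2 * s ^ 3 - 4 * s ^ 2 - 18 * s + 3) /
        (5 * (s + 3) ^ 2 * (s ^ 2 + 3) ^ 2 * (s - 1) ^ 2) := by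
  have hid := hasDerivAt_id' s
  have hsq := hid.fun_pow 2
  have hnum := (((hsq.fun_add (hid.const_mul 4)).sub_const 1).const_mul 4).fun_mul hsq
  have hden := (((hid.add_const 3).const_mul 5).fun_mul (hsq.add_const 3)).fun_mul (hid.sub_const 1)
  refine ((hnum.fun_div hden (by simp [*])).congr_deriv ?_).deriv
  field_simp
  ring

lemma deriv_yFun14_div_deriv_tFun14 (h0 : s ≠ 0) (ha : s + 3 ≠ 0) (hb : s - 1 ≠ 0)
    (hc : s ^ 2 + 3 ≠ 0) (hd : s - 3 ≠ 0) :
    deriv yFun14 s / deriv tFun14 s = slopeFun14 s := by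
  rw [deriv_yFun14 ha hb hc, deriv_tFun14 ha hb, slopeFun14]
  field_simp
  ring

open scoped Topology in
lemma deriv_yFun14_div_deriv_tFun14_eventuallyEq (h0 : s ≠ 0) (ha : s + 3 ≠ 0) (hb : s - 1 ≠ 0)
    (hc : s ^ 2 + 3 ≠ 0) (hd : s - 3 ≠ 0) :
    (fun u => deriv yFun14 u / deriv tFun14 u) =ᶠ[𝓝 s] slopeFun14 := by
  have eventually_ne {f : ℂ → ℂ} (hf : Continuous f) (hfs : f s ≠ 0) : ∀ᶠ u in 𝓝 s, f u ≠ 0 :=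
    hf.continuousAt.eventually_ne hfs
  filter_upwards [eventually_ne continuous_id h0,
    eventually_ne (f := (· + 3)) (by fun_prop) ha,
    eventually_ne (f := (· - 1)) (by fun_prop) hb,
    eventually_ne (f := (· ^ 2 + 3)) (by fun_prop) hc,
    eventually_ne (f := (· - 3)) (by fun_prop) hd] with u
  exact deriv_yFun14_div_deriv_tFun14

lemma deriv_slopeFun14 (h0 : s ≠ 0) (hc : s ^ 2 + 3 ≠ 0) (hd : s - 3 ≠ 0) :
    deriv slopeFun14 s =
      -((s + 3) * (s - 1) * (11 * s ^ 6 - 117 * s ^ 4 + 729 * s ^ 2 + 81)) /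
        (10 * s ^ 2 * (s - 3) ^ 2 * (s ^ 2 + 3) ^ 3) := by
  have hid := hasDerivAt_id' s
  have hsq := hid.fun_pow 2
  have hquartic := (((((hid.fun_pow 4).fun_add ((hid.fun_pow 3).const_mul 2)).fun_sub
    (hsq.const_mul 4)).fun_sub (hid.const_mul 18)).add_const 3)
  have hnum := hquartic.fun_mul ((hid.add_const 3).fun_pow 2)
  have hden := ((hid.const_mul 10).fun_mul (hid.sub_const 3)).fun_mul ((hsq.add_const 3).fun_pow 2)
  refine ((hnum.fun_div hden (by simp [*])).congr_deriv ?_).deriv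
  field_simp
  ring

lemma deriv_slopeFun14_div_deriv_tFun14 (h0 : s ≠ 0) (ha : s + 3 ≠ 0) (hb : s - 1 ≠ 0)
    (hc : s ^ 2 + 3 ≠ 0) (hd : s - 3 ≠ 0) :
    deriv slopeFun14 s / deriv tFun14 s =
      (s + 3) ^ 5 * (s - 1) ^ 3 * (11 * s ^ 6 - 117 * s ^ 4 + 729 * s ^ 2 + 81) /
        (160 * s ^ 4 * (s - 3) ^ 4 * (s ^ 2 + 3) ^ 3) := by
  rw [deriv_slopeFun14 h0 hc hd, deriv_tFun14 ha hb]
  field_simp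
  ring

lemma painleveSixQuadratic_tFun14_yFun14 (h0 : s ≠ 0) (ha : s + 3 ≠ 0) (hb : s - 1 ≠ 0)
    (hc : s ^ 2 + 3 ≠ 0) (hd : s - 3 ≠ 0) (hy : s ^ 2 + 4 * s - 1 ≠ 0) (hy1 : s ^ 2 - 5 ≠ 0)
    (hyt : s ^ 2 - 4 * s - 1 ≠ 0) :
    painleveSixQuadratic (tFun14 s) (yFun14 s) =
      -(5 * (s + 3) * (s - 1) * (s ^ 2 + 3) * (s ^ 6 - 63 * s ^ 4 + 171 * s ^ 2 - 45)) /
        (2 * s ^ 2 * (s - 3) ^ 2 * (s ^ 2 + 4 * s - 1) * (s ^ 2 - 5) * (s ^ 2 - 4 * s - 1)) := by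
  -- `field_simp` only recognises the quadratic factors in this Horner form.
  have hy' : s * (s + 4) - 1 ≠ 0 := by rwa [mul_add, ← sq, mul_comm s 4]
  have hyt' : s * (s - 4) - 1 ≠ 0 := by rwa [mul_sub, ← sq, mul_comm s 4]
  rw [painleveSixQuadratic, yFun14_sub_one ha hb hc, yFun14_sub_tFun14 ha hb hc, yFun14]
  field_simp
  ring

lemma painleveSixLinear_tFun14_yFun14 (h0 : s ≠ 0) (ha : s + 3 ≠ 0) (hb : s - 1 ≠ 0)
    (hc : s ^ 2 + 3 ≠ 0) (hd : s - 3 ≠ 0) (ht1 : s + 1 ≠ 0) (hyt : s ^ 2 - 4 * s - 1 ≠ 0) :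
    painleveSixLinear (tFun14 s) (yFun14 s) =
      (s + 3) ^ 3 * (s - 1) *
          (s ^ 6 - 8 * s ^ 5 + 73 * s ^ 4 - 48 * s ^ 3 - 165 * s ^ 2 - 72 * s + 27) /
        (16 * s ^ 3 * (s - 3) ^ 3 * (s + 1) * (s ^ 2 - 4 * s - 1)) := by
  have hyt' : s * (s - 4) - 1 ≠ 0 := by rwa [mul_sub, ← sq, mul_comm s 4]
  rw [painleveSixLinear, tFun14_sub_one ha hb, yFun14_sub_tFun14 ha hb hc, tFun14]
  field_simp
  ring

lemma painleveSixForce_tFun14_yFun14 (h0 : s ≠ 0) (ha : s + 3 ≠ 0) (hb : s - 1 ≠ 0)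
    (hc : s ^ 2 + 3 ≠ 0) (hd : s - 3 ≠ 0) (ht1 : s + 1 ≠ 0) (hy : s ^ 2 + 4 * s - 1 ≠ 0)
    (hy1 : s ^ 2 - 5 ≠ 0) (hyt : s ^ 2 - 4 * s - 1 ≠ 0) :
    painleveSixForce (25 / 32) (-1 / 32) (1 / 32) (15 / 32) (tFun14 s) (yFun14 s) =
      (s + 3) ^ 7 * (s - 1) *
          (s ^ 12 + 8 * s ^ 11 + 10 * s ^ 10 - 104 * s ^ 9 + 175 * s ^ 8 - 176 * s ^ 7
            - 1076 * s ^ 6 + 1072 * s ^ 5 + 1807 * s ^ 4 + 808 * s ^ 3 + 2954 * s ^ 2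
            - 1608 * s + 225) /
        (160 * s ^ 3 * (s - 3) ^ 3 * (s + 1) * (s ^ 2 + 3) ^ 3 *
          (s ^ 2 + 4 * s - 1) * (s ^ 2 - 5) * (s ^ 2 - 4 * s - 1)) := by
  have hy' : s * (s + 4) - 1 ≠ 0 := by rwa [mul_add, ← sq, mul_comm s 4]
  have hyt' : s * (s - 4) - 1 ≠ 0 := by rwa [mul_sub, ← sq, mul_comm s 4]
  rw [painleveSixForce, tFun14_sub_one ha hb, yFun14_sub_one ha hb hc,
    yFun14_sub_tFun14 ha hb hc, tFun14, yFun14]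
  field_simp
  ring

lemma painleveSixRHS_tFun14_yFun14_slopeFun14 (h0 : s ≠ 0) (ha : s + 3 ≠ 0) (hb : s - 1 ≠ 0)
    (hc : s ^ 2 + 3 ≠ 0) (hd : s - 3 ≠ 0) (ht1 : s + 1 ≠ 0) (hy : s ^ 2 + 4 * s - 1 ≠ 0)
    (hy1 : s ^ 2 - 5 ≠ 0) (hyt : s ^ 2 - 4 * s - 1 ≠ 0) :
    painleveSixRHS (25 / 32) (-1 / 32) (1 / 32) (15 / 32) (tFun14 s) (yFun14 s) (slopeFun14 s) =
      (s + 3) ^ 5 * (s - 1) ^ 3 * (11 * s ^ 6 - 117 * s ^ 4 + 729 * s ^ 2 + 81) /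
        (160 * s ^ 4 * (s - 3) ^ 4 * (s ^ 2 + 3) ^ 3) := by
  have hy' : s * (s + 4) - 1 ≠ 0 := by rwa [mul_add, ← sq, mul_comm s 4]
  have hyt' : s * (s - 4) - 1 ≠ 0 := by rwa [mul_sub, ← sq, mul_comm s 4]
  rw [painleveSixRHS, painleveSixQuadratic_tFun14_yFun14 h0 ha hb hc hd hy hy1 hyt,
    painleveSixLinear_tFun14_yFun14 h0 ha hb hc hd ht1 hyt,
    painleveSixForce_tFun14_yFun14 h0 ha hb hc hd ht1 hy hy1 hyt, slopeFun14]
  field_simp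
  ring

end Parametrization

/-- Parametric algebraic solution of the sixth Painlevé equation. -/
theorem stmt_14 (s : ℂ)
    (h1 : s ≠ -3)
    (h2 : s ≠ 1)
    (h3 : s^2+3 ≠ 0)
    (hdt : deriv tFun14 s ≠ 0)
    (ht0 : tFun14 s ≠ 0) (ht1 : tFun14 s ≠ 1)
    (hy0 : yFun14 s ≠ 0) (hy1 : yFun14 s ≠ 1) (hyt : yFun14 s ≠ tFun14 s) :
    deriv (fun u => deriv yFun14 u / deriv tFun14 u) s / deriv tFun14 s =
      (1/2) * (1/(yFun14 s) + 1/(yFun14 s - 1) + 1/(yFun14 s - tFun14 s)) *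
          (deriv yFun14 s / deriv tFun14 s)^2
        - (1/(tFun14 s) + 1/(tFun14 s - 1) + 1/(yFun14 s - tFun14 s)) *
          (deriv yFun14 s / deriv tFun14 s)
        + (yFun14 s * (yFun14 s - 1) * (yFun14 s - tFun14 s) /
            ((tFun14 s)^2 * (tFun14 s - 1)^2)) *
          ((25/32 : ℂ) + (-1/32 : ℂ) * tFun14 s / (yFun14 s)^2
            + (1/32 : ℂ) * (tFun14 s - 1) / (yFun14 s - 1)^2
            + (15/32 : ℂ) * tFun14 s * (tFun14 s - 1) / (yFun14 s - tFun14 s)^2) := by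
  have ha : s + 3 ≠ 0 := fun h => h1 (eq_neg_of_add_eq_zero_left h)
  have hb : s - 1 ≠ 0 := sub_ne_zero.2 h2
  have h0 : s ≠ 0 := fun h => ht0 (by simp [tFun14, h])
  have hd : s - 3 ≠ 0 := fun h => hdt (by simp [deriv_tFun14 ha hb, h])
  have ht1' : s + 1 ≠ 0 := fun h => sub_ne_zero.2 ht1 (by simp [tFun14_sub_one ha hb, h])
  have hy0' : s ^ 2 + 4 * s - 1 ≠ 0 := fun h => hy0 (by simp [yFun14, h])
  have hy1' : s ^ 2 - 5 ≠ 0 := fun h => sub_ne_zero.2 hy1 (by simp [yFun14_sub_one ha hb h3, h])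
  have hyt' : s ^ 2 - 4 * s - 1 ≠ 0 := fun h =>
    sub_ne_zero.2 hyt (by simp [yFun14_sub_tFun14 ha hb h3, h])
  rw [(deriv_yFun14_div_deriv_tFun14_eventuallyEq h0 ha hb h3 hd).deriv_eq,
    deriv_yFun14_div_deriv_tFun14 h0 ha hb h3 hd,
    deriv_slopeFun14_div_deriv_tFun14 h0 ha hb h3 hd]
  exact (painleveSixRHS_tFun14_yFun14_slopeFun14 h0 ha hb h3 hd ht1' hy0' hy1' hyt').symm
end
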